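/- arXiv:1807.00098 — 3 statements merged into one kernel-verified Lean document; each statement's English description precedes it below -/
import Mathlib

section
/- Let E, D : [0, ∞) → ℝ be functions with E nonnegative and D nonnegative and locally integrable, and let c₁ᴱ, c₂ᴱ, c, c_T be positive constants. Assume: (i) for all 0 ≤ t₁ < t₂ one has −c₁ᴱ ∫_{t₁}^{t₂} D(t) dt ≥ E(t₂) − E(t₁) ≥ −c₂ᴱ ∫_{t₁}^{t₂} D(t) dt; (ii) there exists T > 4c such that for every a ≥ 0, ∫_a^{a+T} E(t) dt ≤ c (E(a) + E(a+T)) + c_T ∫_a^{a+T} D(t) dt. Then there exist constants C > 0 and λ > 0 such that E(t) ≤ C e^{−λ t} E(0) for all t ≥ 0. -/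
open MeasureTheory

/-- Abstract exponential stability theorem (Theorem A.1): a nonnegative energy `E`
whose decay between any two times is controlled above and below by the time
integral of a nonnegative locally integrable damping rate `D`, and which satisfies
an observability-through-damping inequality on all windows of some fixed length
`T > 4c`, decays exponentially. -/
theorem abstract_exponential_stability
    (E D : ℝ → ℝ)
    (hE_nonneg : ∀ t, 0 ≤ t → 0 ≤ E t)
    (hD_nonneg : ∀ t, 0 ≤ D t)
    (hD_loc : LocallyIntegrableOn D (Set.Ici (0 : ℝ)))
    (c₁E c₂E c cT : ℝ)
    (hc₁E : 0 < c₁E) (hc₂E : 0 < c₂E) (hc : 0 < c) (hcT : 0 < cT)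
    (hdecay : ∀ t₁ t₂ : ℝ, 0 ≤ t₁ → t₁ < t₂ →
      E t₂ - E t₁ ≤ -c₁E * ∫ t in t₁..t₂, D t ∧
      -c₂E * ∫ t in t₁..t₂, D t ≤ E t₂ - E t₁)
    (hobs : ∃ T : ℝ, 4 * c < T ∧ ∀ a : ℝ, 0 ≤ a →
      (∫ t in a..(a + T), E t) ≤ c * (E a + E (a + T)) + cT * ∫ t in a..(a + T), D t) :
    ∃ C lam : ℝ, 0 < C ∧ 0 < lam ∧
      ∀ t, 0 ≤ t → E t ≤ C * Real.exp (-lam * t) * E 0 := by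
  obtain ⟨T, hT, hobs⟩ := hobs
  have hTpos : 0 < T := by linarith
  have hmono : ∀ s t : ℝ, 0 ≤ s → s ≤ t → E t ≤ E s := by
    intro s t hs hst
    rcases hst.eq_or_lt with h | h
    · rw [h]
    · have h1 := (hdecay s t hs h).1
      have h2 : 0 ≤ ∫ u in s..t, D u :=
        intervalIntegral.integral_nonneg hst (fun u _ => hD_nonneg u)
      nlinarith [mul_nonneg hc₁E.le h2]
  obtain ⟨k, hk⟩ : ∃ k, k = cT / c₁E := ⟨_, rfl⟩
  have hkpos : 0 < k := by rw [hk]; positivity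
  have hden : 0 < T - c + k := by linarith
  obtain ⟨q, hq⟩ : ∃ q, q = (c + k) / (T - c + k) := ⟨_, rfl⟩
  have hqpos : 0 < q := by rw [hq]; positivity
  have hq1 : q < 1 := by rw [hq, div_lt_one hden]; linarith
  have hstep : ∀ a, 0 ≤ a → E (a + T) ≤ q * E a := by
    intro a ha
    have hle : a ≤ a + T := by linarith
    have hint : IntervalIntegrable E volume a (a + T) := by
      apply AntitoneOn.intervalIntegrable
      rw [Set.uIcc_of_le hle]
      intro x hx y _ hxy
      exact hmono x y (ha.trans hx.1) hxy
    have h1 : (∫ _ in a..(a + T), E (a + T)) ≤ ∫ t in a..(a + T), E t := by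
      apply intervalIntegral.integral_mono_on hle (by simp) hint
      intro x hx
      exact hmono x (a + T) (ha.trans hx.1) hx.2
    rw [intervalIntegral.integral_const, smul_eq_mul, add_sub_cancel_left] at h1
    have h2 := hobs a ha
    have h3 := (hdecay a (a + T) ha (by linarith)).1
    have h4 : cT * (∫ t in a..(a + T), D t) ≤ k * (E a - E (a + T)) := by
      have h5 : cT = k * c₁E := by rw [hk]; field_simp
      rw [h5, mul_assoc]
      apply mul_le_mul_of_nonneg_left _ hkpos.le
      linarith
    rw [hq, div_mul_eq_mul_div, le_div_iff₀ hden]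
    linarith
  have hpow : ∀ n : ℕ, E (n * T) ≤ q ^ n * E 0 := by
    intro n
    induction n with
    | zero => simp
    | succ n ih =>
      have h := hstep (n * T) (by positivity)
      have e : ((n + 1 : ℕ) : ℝ) * T = n * T + T := by push_cast; ring
      rw [e, pow_succ]
      have := mul_le_mul_of_nonneg_left ih hqpos.le
      linarith
  have hlog : Real.log q < 0 := Real.log_neg hqpos hq1
  refine ⟨Real.exp (-Real.log q), -Real.log q / T, Real.exp_pos _,
    div_pos (by linarith) hTpos, ?_⟩
  intro t ht
  have hn1 : (⌊t / T⌋₊ : ℝ) ≤ t / T := Nat.floor_le (by positivity)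
  have hn2 : t / T < (⌊t / T⌋₊ : ℝ) + 1 := Nat.lt_floor_add_one _
  have h1 : E t ≤ E (⌊t / T⌋₊ * T) :=
    hmono _ _ (by positivity) ((le_div_iff₀ hTpos).1 hn1)
  refine (h1.trans (hpow _)).trans ?_
  apply mul_le_mul_of_nonneg_right _ (hE_nonneg 0 le_rfl)
  rw [← Real.exp_add]
  have e : q ^ ⌊t / T⌋₊ = Real.exp (⌊t / T⌋₊ * Real.log q) := by
    rw [Real.exp_nat_mul, Real.exp_log hqpos]
  rw [e]
  apply Real.exp_le_exp.2
  have e2 : -Real.log q + -(-Real.log q / T) * t = (t / T - 1) * Real.log q := by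
    field_simp
    ring
  rw [e2]
  exact mul_le_mul_of_nonpos_right (by linarith) hlog.le
end

section
/- Let E, D : [0, ∞) → ℝ with E nonnegative and D nonnegative and locally integrable, let c₁ᴱ, c₂ᴱ, c, c_T > 0 and T > 4c. Assume: (i) for all 0 ≤ t₁ < t₂ one has −c₁ᴱ ∫_{t₁}^{t₂} D(t) dt ≥ E(t₂) − E(t₁) ≥ −c₂ᴱ ∫_{t₁}^{t₂} D(t) dt; (ii) ∫_0^T E(t) dt ≤ c (E(0) + E(T)) + c_T ∫_0^T D(t) dt. Then, setting c̃ := (c_T + c c₂ᴱ)/c₁ᴱ, one has (T/2 + c̃) E(T) ≤ c̃ E(0); in particular E(T) ≤ γ E(0) with γ := c̃/(c̃ + T/2) < 1. -/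
open MeasureTheory

/-- Intermediate step (inequalities (A.8)–(A.11)): for a window length `T > 4c`,
the energy at time `T` is a fixed fraction `γ < 1` of the initial energy. -/
theorem energy_contraction_after_one_period
    (E D : ℝ → ℝ)
    (hE_nonneg : ∀ t, 0 ≤ t → 0 ≤ E t)
    (hD_nonneg : ∀ t, 0 ≤ D t)
    (hD_loc : LocallyIntegrableOn D (Set.Ici (0 : ℝ)))
    (c₁E c₂E c cT T : ℝ)
    (hc₁E : 0 < c₁E) (hc₂E : 0 < c₂E) (hc : 0 < c) (hcT : 0 < cT) (hT : 4 * c < T)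
    (hdecay : ∀ t₁ t₂ : ℝ, 0 ≤ t₁ → t₁ < t₂ →
      E t₂ - E t₁ ≤ -c₁E * ∫ t in t₁..t₂, D t ∧
      -c₂E * ∫ t in t₁..t₂, D t ≤ E t₂ - E t₁)
    (hobs : (∫ t in (0 : ℝ)..T, E t) ≤ c * (E 0 + E T) + cT * ∫ t in (0 : ℝ)..T, D t) :
    (T / 2 + (cT + c * c₂E) / c₁E) * E T ≤ ((cT + c * c₂E) / c₁E) * E 0 ∧
    E T ≤ (((cT + c * c₂E) / c₁E) / ((cT + c * c₂E) / c₁E + T / 2)) * E 0 ∧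
    ((cT + c * c₂E) / c₁E) / ((cT + c * c₂E) / c₁E + T / 2) < 1 := by
  have hTpos : 0 < T := by linarith
  have hanti : AntitoneOn E (Set.Icc 0 T) := by
    intro a ha b hb hab
    rcases hab.eq_or_lt with h | h
    · rw [h]
    · have h1 := (hdecay a b ha.1 h).1
      have h2 : 0 ≤ ∫ t in a..b, D t :=
        intervalIntegral.integral_nonneg hab (fun t _ => hD_nonneg t)
      nlinarith [mul_nonneg hc₁E.le h2]
  have hint : IntervalIntegrable E volume 0 T := by
    apply AntitoneOn.intervalIntegrable
    rwa [Set.uIcc_of_le hTpos.le]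
  have hlow : T * E T ≤ ∫ t in (0 : ℝ)..T, E t := by
    have h := intervalIntegral.integral_mono_on (f := fun _ => E T) hTpos.le
      intervalIntegrable_const hint
      (fun x hx => hanti hx (Set.right_mem_Icc.2 hTpos.le) hx.2)
    simpa using h
  obtain ⟨h1, h2⟩ := hdecay 0 T le_rfl hTpos
  have hET := hE_nonneg T hTpos.le
  set I := ∫ t in (0 : ℝ)..T, D t with hI
  set K := (cT + c * c₂E) / c₁E with hK
  have hKpos : 0 < K := by positivity
  have hKc : K * c₁E = cT + c * c₂E := by rw [hK]; field_simp
  have hmain : (T / 2 + K) * E T ≤ K * E 0 := by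
    have a1 : K * (c₁E * I) ≤ K * (E 0 - E T) :=
      mul_le_mul_of_nonneg_left (by linarith) hKpos.le
    have a2 : K * (c₁E * I) = cT * I + c * (c₂E * I) := by
      rw [← mul_assoc, hKc]; ring
    have a3 : c * E 0 ≤ c * (E T + c₂E * I) :=
      mul_le_mul_of_nonneg_left (by linarith) hc.le
    have a4 : 4 * c * E T ≤ T * E T := mul_le_mul_of_nonneg_right hT.le hET
    linarith
  refine ⟨hmain, ?_, ?_⟩
  · rw [div_mul_eq_mul_div, le_div_iff₀ (by positivity)]
    linarith
  · rw [div_lt_one (by positivity)]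
    linarith
end

section
/- Let g : ℝ³ → ℝ³ satisfy g(0) = 0, the strong monotonicity condition (g(x) − g(y))·(x − y) ≥ c₁|x − y|² for all x, y ∈ ℝ³, and the Lipschitz condition |g(x) − g(y)| ≤ c₂|x − y| for all x, y ∈ ℝ³, with constants c₁, c₂ > 0. Let γ₁, γ₂ > 0 satisfy γ₁ c₁ > γ₂ c₂ and let ξ satisfy γ₂ c₂ / 2 < ξ < γ₁ c₁ − γ₂ c₂ / 2. Then for all z₀, z₁ ∈ ℝ³: −(γ₁ g(z₀) + γ₂ g(z₁))·z₀ + ξ(|z₀|² − |z₁|²) ≤ −min(γ₁ c₁ − γ₂ c₂/2 − ξ, ξ − γ₂ c₂/2) · (|z₀|² + |z₁|²). -/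
open scoped RealInnerProductSpace

/-- Pointwise dissipation estimate at the heart of Lemma 3.1 (upper energy–damping
inequality (3.5)): the boundary feedback term plus the Lyapunov correction
`ξ(|z₀|² − |z₁|²)` is bounded above by a negative multiple of `|z₀|² + |z₁|²`,
provided `γ₁c₁ > γ₂c₂` and `ξ ∈ (γ₂c₂/2, γ₁c₁ − γ₂c₂/2)`. -/
theorem boundary_feedback_dissipation_upper
    (g : EuclideanSpace ℝ (Fin 3) → EuclideanSpace ℝ (Fin 3))
    (c₁ c₂ : ℝ) (hc₁ : 0 < c₁) (hc₂ : 0 < c₂)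
    (hg0 : g 0 = 0)
    (hmono : ∀ x y : EuclideanSpace ℝ (Fin 3), c₁ * ‖x - y‖ ^ 2 ≤ ⟪g x - g y, x - y⟫)
    (hlip : ∀ x y : EuclideanSpace ℝ (Fin 3), ‖g x - g y‖ ≤ c₂ * ‖x - y‖)
    (γ₁ γ₂ ξ : ℝ) (hγ₁ : 0 < γ₁) (hγ₂ : 0 < γ₂)
    (hgain : γ₂ * c₂ < γ₁ * c₁)
    (hξ₁ : γ₂ * c₂ / 2 < ξ) (hξ₂ : ξ < γ₁ * c₁ - γ₂ * c₂ / 2) :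
    ∀ z₀ z₁ : EuclideanSpace ℝ (Fin 3),
      -⟪γ₁ • g z₀ + γ₂ • g z₁, z₀⟫ + ξ * (‖z₀‖ ^ 2 - ‖z₁‖ ^ 2) ≤
        -(min (γ₁ * c₁ - γ₂ * c₂ / 2 - ξ) (ξ - γ₂ * c₂ / 2)) * (‖z₀‖ ^ 2 + ‖z₁‖ ^ 2) := by
  intro z₀ z₁
  have h0 := hmono z₀ 0
  have h1 := hlip z₁ 0
  simp only [hg0, sub_zero] at h0 h1
  have h2 : -(‖g z₁‖ * ‖z₀‖) ≤ ⟪g z₁, z₀⟫ :=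
    (abs_le.mp (abs_real_inner_le_norm (g z₁) z₀)).1
  have h3 : ‖g z₁‖ * ‖z₀‖ ≤ c₂ * ‖z₁‖ * ‖z₀‖ :=
    mul_le_mul_of_nonneg_right h1 (norm_nonneg _)
  have h4 : c₂ * ‖z₁‖ * ‖z₀‖ ≤ c₂ * ((‖z₀‖ ^ 2 + ‖z₁‖ ^ 2) / 2) := by
    rw [mul_assoc]
    apply mul_le_mul_of_nonneg_left _ hc₂.le
    nlinarith [sq_nonneg (‖z₀‖ - ‖z₁‖)]
  have h5 : -(c₂ * ((‖z₀‖ ^ 2 + ‖z₁‖ ^ 2) / 2)) ≤ ⟪g z₁, z₀⟫ := by linarith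
  have h6 := mul_le_mul_of_nonneg_left h0 hγ₁.le
  have h7 := mul_le_mul_of_nonneg_left h5 hγ₂.le
  have h8 := mul_le_mul_of_nonneg_right
    (min_le_left (γ₁ * c₁ - γ₂ * c₂ / 2 - ξ) (ξ - γ₂ * c₂ / 2)) (sq_nonneg ‖z₀‖)
  have h9 := mul_le_mul_of_nonneg_right
    (min_le_right (γ₁ * c₁ - γ₂ * c₂ / 2 - ξ) (ξ - γ₂ * c₂ / 2)) (sq_nonneg ‖z₁‖)
  rw [inner_add_left, real_inner_smul_left, real_inner_smul_left]
  linarith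
end
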